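/- Let n ≥ 3. Let U₁, …, U_n be i.i.d. centered Gaussian random variables of variance 1/180 and, independently, let (V_{ij})_{1≤i<j≤n} be i.i.d. centered Gaussian random variables of variance 1/36; set Z_{ij} = U_i + U_j + V_{ij}. For t ∈ ℝ, let G_t be the random labelled graph on {1,…,n} with an edge between i and j exactly when Z_{ij} ≤ t, and let H(t) = −Σ_g P(G_t = g) log₂ P(G_t = g) be its Shannon entropy. Then H(t) < n(n−1)/2 for every t ∈ ℝ; that is, the d → ∞ limiting distribution of hard random geometric graphs in the unit cube with uniform nodes never attains the maximum possible entropy, and in particular never equals the Erdős–Rényi ensemble G(n, 1/2). -/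

import Mathlib

open MeasureTheory ProbabilityTheory

/-- Index type of (unordered) pairs `i < j` of nodes. -/
abbrev Pairs (n : ℕ) := {p : Fin n × Fin n // p.1 < p.2}

/-- The joint law of the independent Gaussians `U₁,…,U_n` (variance `1/180`) and
`(V_{ij})_{i<j}` (variance `1/36`). -/
noncomputable def cubeGaussLaw (n : ℕ) : Measure ((Fin n → ℝ) × (Pairs n → ℝ)) :=
  (Measure.pi fun _ : Fin n => gaussianReal 0 (1/180 : NNReal)).prod
    (Measure.pi fun _ : Pairs n => gaussianReal 0 (1/36 : NNReal))

/-- `Z_{ij} = U_i + U_j + V_{ij}`, the limiting normalised squared distances in the cube. -/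
noncomputable def Zvar (n : ℕ) (ω : (Fin n → ℝ) × (Pairs n → ℝ)) (q : Pairs n) : ℝ :=
  ω.1 q.1.1 + ω.1 q.1.2 + ω.2 q

/-- `P(G_t = g)` for the limiting hard RGG in the cube: edge `(i,j)` present iff `Z_{ij} ≤ t`. -/
noncomputable def limProb (n : ℕ) (t : ℝ) (g : SimpleGraph (Fin n)) : ℝ :=
  (cubeGaussLaw n {ω | ∀ q : Pairs n, (Zvar n ω q ≤ t ↔ g.Adj q.1.1 q.1.2)}).toReal

/-- The Shannon entropy (base 2) of the limiting hard RGG ensemble in the cube. -/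
noncomputable def limEntropy (n : ℕ) (t : ℝ) : ℝ :=
  -∑ g : SimpleGraph (Fin n), limProb n t g * Real.logb 2 (limProb n t g)


/-- Graphs are the same as predicates on pairs. -/
noncomputable def graphEquiv (n : ℕ) : SimpleGraph (Fin n) ≃ (Pairs n → Prop) where
  toFun g q := g.Adj q.1.1 q.1.2
  invFun f :=
    { Adj := fun i j => (∃ h : i < j, f ⟨(i, j), h⟩) ∨ (∃ h : j < i, f ⟨(j, i), h⟩)
      symm := ⟨fun i j h => h.symm⟩
      loopless := ⟨fun i h => by rcases h with ⟨h, _⟩ | ⟨h, _⟩ <;> exact lt_irrefl _ h⟩ }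
  left_inv g := by
    ext i j
    rcases lt_trichotomy i j with h | h | h
    · simp [h, h.not_gt]
    · subst h; simp
    · simp [h, h.not_gt, g.adj_comm]
  right_inv f := by
    funext q
    obtain ⟨⟨i, j⟩, h⟩ := q
    have h' : i < j := h
    simp [h', h'.not_gt]

lemma card_pairs (n : ℕ) : ((Fintype.card (Pairs n) : ℕ) : ℝ) = (n : ℝ) * ((n : ℝ) - 1) / 2 := by
  have h1 : Fintype.card (Pairs n) = ∑ j : Fin n, (j : ℕ) := by
    rw [Fintype.card_subtype, Finset.card_filter, Fintype.sum_prod_type_right]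
    refine Finset.sum_congr rfl fun j _ => ?_
    rw [← Finset.card_filter]
    have : (Finset.univ.filter fun i : Fin n => i < j) = Finset.Iio j := by ext; simp
    simp [this]
  have h2 : (Fintype.card (Pairs n)) * 2 = n * (n - 1) := by
    rw [h1, Fin.sum_univ_eq_sum_range (fun i => i) n, Finset.sum_range_id_mul_two]
  have h3 : ((Fintype.card (Pairs n) : ℕ) : ℝ) * 2 = n * ((n : ℝ) - 1) := by
    rcases n with _ | n
    · simp
    · have := congrArg (fun x : ℕ => (x : ℝ)) h2
      push_cast at this
      simpa using this
  linarith

lemma card_graphs (n : ℕ) : Fintype.card (SimpleGraph (Fin n)) = 2 ^ Fintype.card (Pairs n) := by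
  classical
  rw [Fintype.card_congr (graphEquiv n)]
  simp

lemma gibbs_strict {α : Type*} [Fintype α] [Nonempty α] (p : α → ℝ) (h0 : ∀ a, 0 ≤ p a)
    (h1 : ∑ a, p a = 1) (hne : ∃ a, p a ≠ 1 / (Fintype.card α : ℝ)) :
    -∑ a, p a * Real.logb 2 (p a) < Real.logb 2 (Fintype.card α) := by
  have hN : (0 : ℝ) < Fintype.card α := by exact_mod_cast Fintype.card_pos
  set N : ℝ := ((Fintype.card α : ℕ) : ℝ) with hNdef
  have hlt : ∀ a, p a ≠ 1 / N → -(p a * Real.log (p a)) - p a * Real.log N < 1 / N - p a := by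
    intro a ha
    rcases (h0 a).eq_or_lt with h | h
    · rw [← h]; simp [hN]
    · have hx : 0 < 1 / (N * p a) := by positivity
      have hx1 : 1 / (N * p a) ≠ 1 := by
        intro hh
        apply ha
        field_simp at hh ⊢
        linarith
      have := Real.log_lt_sub_one_of_pos hx hx1
      rw [one_div, Real.log_inv, Real.log_mul hN.ne' h.ne'] at this
      have h2 := mul_lt_mul_of_pos_left this h
      have h3 : p a * ((N * p a)⁻¹ - 1) = 1 / N - p a := by field_simp
      linarith
  have hle : ∀ a, -(p a * Real.log (p a)) - p a * Real.log N ≤ 1 / N - p a := by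
    intro a
    by_cases ha : p a = 1 / N
    · rw [ha, one_div, Real.log_inv]; apply le_of_eq; ring
    · exact (hlt a ha).le
  obtain ⟨a, ha⟩ := hne
  have hs := Finset.sum_lt_sum (s := Finset.univ) (fun a _ => hle a) ⟨a, Finset.mem_univ _, hlt a ha⟩
  rw [Finset.sum_sub_distrib, Finset.sum_sub_distrib, ← Finset.sum_mul, h1, Finset.sum_neg_distrib]
    at hs
  have hc : ∑ _a : α, 1 / N = 1 := by
    simp [Finset.sum_const, ← hNdef, hN.ne']
  rw [hc] at hs
  have hl2 : 0 < Real.log 2 := Real.log_pos (by norm_num)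
  have he : ∑ a, p a * Real.logb 2 (p a) = (∑ a, p a * Real.log (p a)) / Real.log 2 := by
    rw [Finset.sum_div]
    exact Finset.sum_congr rfl fun a _ => by rw [Real.logb]; ring
  rw [he, Real.logb, ← neg_div, div_lt_div_iff_of_pos_right hl2]
  linarith

/-- sign of presence -/
noncomputable def sg (t x : ℝ) : ℝ := if x ≤ t then 1 else -1

lemma measurable_sg (t : ℝ) : Measurable (sg t) :=
  Measurable.ite measurableSet_Iic measurable_const measurable_const

lemma abs_sg (t x : ℝ) : |sg t x| = 1 := by
  unfold sg; split_ifs <;> simp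

instance (n : ℕ) : IsProbabilityMeasure (cubeGaussLaw n) := by
  unfold cubeGaussLaw; infer_instance

/-- coordinates -/
def coordF (n : ℕ) (i : Fin n ⊕ Pairs n) (ω : (Fin n → ℝ) × (Pairs n → ℝ)) : ℝ :=
  Sum.elim (fun i => ω.1 i) (fun q => ω.2 q) i

lemma measurable_coordF (n : ℕ) (i) : Measurable (coordF n i) := by
  rcases i with i | i
  · exact (measurable_pi_apply i).comp measurable_fst
  · exact (measurable_pi_apply i).comp measurable_snd

lemma map_inl (n : ℕ) (i : Fin n) :
    (cubeGaussLaw n).map (coordF n (Sum.inl i)) = gaussianReal 0 (1/180 : NNReal) := by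
  have : coordF n (Sum.inl i) = (fun x : Fin n → ℝ => x i) ∘ Prod.fst := rfl
  rw [this, ← Measure.map_map (measurable_pi_apply i) measurable_fst, cubeGaussLaw]
  rw [(measurePreserving_fst).map_eq]
  exact (measurePreserving_eval (fun _ : Fin n => gaussianReal 0 (1/180 : NNReal)) i).map_eq

lemma map_inr (n : ℕ) (i : Pairs n) :
    (cubeGaussLaw n).map (coordF n (Sum.inr i)) = gaussianReal 0 (1/36 : NNReal) := by
  have : coordF n (Sum.inr i) = (fun x : Pairs n → ℝ => x i) ∘ Prod.snd := rfl
  rw [this, ← Measure.map_map (measurable_pi_apply i) measurable_snd, cubeGaussLaw]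
  rw [(measurePreserving_snd).map_eq]
  exact (measurePreserving_eval (fun _ : Pairs n => gaussianReal 0 (1/36 : NNReal)) i).map_eq

lemma indep_coordF (n : ℕ) : iIndepFun (coordF n) (cubeGaussLaw n) := by
  rw [iIndepFun_iff_map_fun_eq_pi_map (fun i => (measurable_coordF n i).aemeasurable)]
  let μ : Fin n ⊕ Pairs n → Measure ℝ := fun i => (cubeGaussLaw n).map (coordF n i)
  have : ∀ i, IsProbabilityMeasure (μ i) := fun i =>
    Measure.isProbabilityMeasure_map (measurable_coordF n i).aemeasurable
  have h := (measurePreserving_sumPiEquivProdPi_symm (X := fun _ : Fin n ⊕ Pairs n => ℝ) μ).map_eq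
  change _ = Measure.pi μ
  rw [← h]
  have h1 : (Measure.pi fun i : Fin n => μ (Sum.inl i)).prod
      (Measure.pi fun i : Pairs n => μ (Sum.inr i)) = cubeGaussLaw n := by
    simp only [μ, map_inl, map_inr]; rfl
  rw [h1]
  congr 1

/-- law of U+V -/
noncomputable def nuW : Measure ℝ := gaussianReal 0 ((1/180 : NNReal) + 1/36)
instance : IsProbabilityMeasure nuW := by unfold nuW; infer_instance

lemma joint_law (n : ℕ) (a b c : Fin n) (q r : Pairs n) (hab : a ≠ b) (hac : a ≠ c) (hbc : b ≠ c)
    (hqr : q ≠ r) :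
    (cubeGaussLaw n).map (fun ω => (ω.1 a, (ω.1 b + ω.2 q, ω.1 c + ω.2 r)))
      = (gaussianReal 0 (1/180 : NNReal)).prod (nuW.prod nuW) := by
  classical
  have hI := indep_coordF n
  have hm := measurable_coordF n
  have hW : ∀ (i : Fin n) (s : Pairs n),
      (cubeGaussLaw n).map (coordF n (Sum.inl i) + coordF n (Sum.inr s)) = nuW := by
    intro i s
    have := gaussianReal_add_gaussianReal_of_indepFun
      (hI.indepFun (i := Sum.inl i) (j := Sum.inr s) (by simp)) (map_inl n i) (map_inr n s)
    rw [this, nuW]; simp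
  have h2 := hI.indepFun_add_add hm (Sum.inl b) (Sum.inr q) (Sum.inl c) (Sum.inr r)
    (by simpa using hbc) (by simp) (by simp) (by simpa using hqr)
  have h2' := h2.map_prod_eq_prod_map_map ((hm _).add (hm _)).aemeasurable
    ((hm _).add (hm _)).aemeasurable
  rw [hW, hW] at h2'
  have h3 := hI.indepFun_finset {Sum.inl a} {Sum.inl b, Sum.inr q, Sum.inl c, Sum.inr r}
    (by simp [hab, hac]) hm
  have m1 : Measurable (fun x : (({Sum.inl a} : Finset (Fin n ⊕ Pairs n)) → ℝ) =>
      x ⟨Sum.inl a, by simp⟩) := by fun_prop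
  have m2 : Measurable (fun x : (({Sum.inl b, Sum.inr q, Sum.inl c, Sum.inr r} :
        Finset (Fin n ⊕ Pairs n)) → ℝ) => (x ⟨Sum.inl b, by simp⟩ + x ⟨Sum.inr q, by simp⟩,
      x ⟨Sum.inl c, by simp⟩ + x ⟨Sum.inr r, by simp⟩)) := by fun_prop
  have h4 := h3.comp m1 m2
  have h5 : IndepFun (coordF n (Sum.inl a))
      (fun ω => ((coordF n (Sum.inl b) + coordF n (Sum.inr q)) ω,
        (coordF n (Sum.inl c) + coordF n (Sum.inr r)) ω)) (cubeGaussLaw n) := h4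
  have h6 := h5.map_prod_eq_prod_map_map (hm _).aemeasurable
    (((hm _).add (hm _)).prodMk ((hm _).add (hm _))).aemeasurable
  rw [h2', map_inl] at h6
  exact h6

/-- conditional mean of the sign -/
noncomputable def kf (t a : ℝ) : ℝ := ∫ b, sg t (a + b) ∂nuW

lemma integrable_sg {α : Type*} [MeasurableSpace α] (μ : Measure α) [IsFiniteMeasure μ] (t : ℝ)
    (f : α → ℝ) (hf : Measurable f) : Integrable (fun x => sg t (f x)) μ := by
  refine Integrable.of_bound ((measurable_sg t).comp hf).aestronglyMeasurable 1 ?_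
  exact Filter.Eventually.of_forall fun x => by simp [abs_sg]

lemma var_ne : ((1/180 : NNReal) + 1/36) ≠ 0 := by positivity

lemma kf_strictAnti (t : ℝ) : StrictAnti (kf t) := by
  intro a a' h
  unfold kf
  have hi := integrable_sg nuW t (fun b => a + b) (by fun_prop)
  have hi' := integrable_sg nuW t (fun b => a' + b) (by fun_prop)
  rw [← sub_pos, ← integral_sub hi hi']
  have hle : ∀ b, 0 ≤ sg t (a + b) - sg t (a' + b) := by
    intro b; unfold sg; split_ifs <;> first | (exfalso; linarith) | norm_num
  rw [integral_pos_iff_support_of_nonneg hle (hi.sub hi')]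
  have hsub : Set.Ioo (t - a') (t - a) ⊆
      Function.support fun b => sg t (a + b) - sg t (a' + b) := by
    intro b hb
    obtain ⟨h1, h2⟩ := hb
    simp only [Function.mem_support]
    unfold sg
    rw [if_pos (by linarith), if_neg (by linarith)]
    norm_num
  refine lt_of_lt_of_le ?_ (measure_mono hsub)
  rw [pos_iff_ne_zero]
  intro h0
  have := gaussianReal_absolutelyContinuous' 0 var_ne h0
  simp at this
  linarith

lemma corr_ne_zero (t : ℝ) :
    ∫ x, sg t (x.1 + x.2.1) * sg t (x.1 + x.2.2)
      ∂((gaussianReal 0 (1/180 : NNReal)).prod (nuW.prod nuW)) ≠ 0 := by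
  have hmeas := measurable_sg t
  have hI : Integrable (fun x : ℝ × ℝ × ℝ => sg t (x.1 + x.2.1) * sg t (x.1 + x.2.2))
      ((gaussianReal 0 (1/180 : NNReal)).prod (nuW.prod nuW)) := by
    refine Integrable.of_bound (Measurable.aestronglyMeasurable (by fun_prop)) 1 ?_
    exact Filter.Eventually.of_forall fun x => by simp [abs_sg]
  rw [integral_prod _ hI]
  have h1 : ∀ a : ℝ, ∫ y : ℝ × ℝ, sg t (a + y.1) * sg t (a + y.2) ∂(nuW.prod nuW)
      = kf t a * kf t a := fun a =>
    integral_prod_mul (fun b => sg t (a + b)) (fun c => sg t (a + c))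
  have hI2 := hI.integral_prod_left
  simp only [h1] at hI2 ⊢
  intro h0
  rw [integral_eq_zero_iff_of_nonneg (fun a => mul_self_nonneg _) hI2] at h0
  have hv : (1/180 : NNReal) ≠ 0 := by positivity
  have := nullSingletonClass_gaussianReal (μ := 0) hv
  have hz : gaussianReal 0 (1/180 : NNReal) {a | kf t a = 0} = 0 := by
    apply Set.Subsingleton.measure_zero
    intro a ha b hb
    exact (kf_strictAnti t).injective (Eq.trans ha (Eq.symm hb))
  have hz' : ∀ᵐ a ∂(gaussianReal 0 (1/180 : NNReal)), kf t a ≠ 0 := by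
    rw [ae_iff]; simpa using hz
  obtain ⟨a, h1, h2⟩ := (h0.and hz').exists
  exact h2 (mul_self_eq_zero.1 h1)

/-- event -/
def evt (n : ℕ) (t : ℝ) (g : SimpleGraph (Fin n)) : Set ((Fin n → ℝ) × (Pairs n → ℝ)) :=
  {ω | ∀ q : Pairs n, (Zvar n ω q ≤ t ↔ g.Adj q.1.1 q.1.2)}

lemma measurable_Zvar (n : ℕ) (q : Pairs n) : Measurable (fun ω => Zvar n ω q) := by
  unfold Zvar; fun_prop

lemma measurableSet_evt (n : ℕ) (t : ℝ) (g : SimpleGraph (Fin n)) : MeasurableSet (evt n t g) := by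
  unfold evt
  rw [Set.ofPred_forall]
  refine MeasurableSet.iInter fun q => ?_
  have := measurable_Zvar n q
  by_cases h : g.Adj q.1.1 q.1.2
  · simp only [h, iff_true]; exact measurableSet_le this measurable_const
  · simp only [h, iff_false, not_le]; exact measurableSet_lt measurable_const this

lemma mem_evt (n : ℕ) (t : ℝ) (g : SimpleGraph (Fin n)) (ω) :
    ω ∈ evt n t g ↔ g = (graphEquiv n).symm (fun q => Zvar n ω q ≤ t) := by
  rw [Equiv.eq_symm_apply]
  constructor
  · intro h; funext q; exact propext (h q).symm
  · intro h q; rw [← congrFun h q]; rfl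

lemma integral_graph (n : ℕ) (t : ℝ) (c : SimpleGraph (Fin n) → ℝ) :
    ∫ ω, c ((graphEquiv n).symm (fun q => Zvar n ω q ≤ t)) ∂(cubeGaussLaw n)
      = ∑ g, limProb n t g * c g := by
  classical
  have h : ∀ ω, c ((graphEquiv n).symm (fun q => Zvar n ω q ≤ t))
      = ∑ g, (evt n t g).indicator (fun _ => c g) ω := by
    intro ω
    simp only [Set.indicator_apply, mem_evt]
    simp
  simp only [h]
  rw [integral_finsetSum _ fun g _ => (integrable_const _).indicator (measurableSet_evt n t g)]
  refine Finset.sum_congr rfl fun g _ => ?_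
  rw [integral_indicator_const _ (measurableSet_evt n t g)]
  rfl

open Classical in
/-- sign of an edge -/
noncomputable def es {n : ℕ} (g : SimpleGraph (Fin n)) (a b : Fin n) : ℝ :=
  if g.Adj a b then 1 else -1

lemma flip_sum (n : ℕ) (a b c : Fin n) (hab : a ≠ b) (hac : a ≠ c) (hbc : b ≠ c) :
    ∑ g : SimpleGraph (Fin n), es g a b * es g a c = 0 := by
  have hinv : Function.Involutive
      (fun g : SimpleGraph (Fin n) => symmDiff g (SimpleGraph.edge a b)) :=
    fun g => symmDiff_symmDiff_cancel_right _ _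
  have h : ∑ g : SimpleGraph (Fin n), es (symmDiff g (SimpleGraph.edge a b)) a b *
      es (symmDiff g (SimpleGraph.edge a b)) a c = ∑ g, es g a b * es g a c :=
    Equiv.sum_comp (hinv.toPerm _) (fun g : SimpleGraph (Fin n) => es g a b * es g a c)
  have h2 : ∀ g : SimpleGraph (Fin n), es (symmDiff g (SimpleGraph.edge a b)) a b *
      es (symmDiff g (SimpleGraph.edge a b)) a c = -(es g a b * es g a c) := by
    intro g
    have e1 : (symmDiff g (SimpleGraph.edge a b)).Adj a b ↔ ¬ g.Adj a b := by
      simp [symmDiff_def, SimpleGraph.edge_adj, hab]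
    have e2 : (symmDiff g (SimpleGraph.edge a b)).Adj a c ↔ g.Adj a c := by
      simp [symmDiff_def, SimpleGraph.edge_adj, hab, hac, hbc.symm]
    unfold es
    by_cases p1 : g.Adj a b <;> by_cases p2 : g.Adj a c <;> simp [e1, e2, p1, p2]
  simp only [h2, Finset.sum_neg_distrib] at h
  linarith

theorem stmt_18 (n : ℕ) (hn : 3 ≤ n) (t : ℝ) :
    limEntropy n t < (n : ℝ) * ((n : ℝ) - 1) / 2 := by
  have hlog : Real.logb 2 (Fintype.card (SimpleGraph (Fin n))) = (n : ℝ) * ((n : ℝ) - 1) / 2 := by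
    rw [card_graphs, ← card_pairs]
    push_cast
    rw [Real.logb_pow, Real.logb_self_eq_one (by norm_num), mul_one]
  rw [← hlog]
  have hsum : ∑ g, limProb n t g = 1 := by
    have := integral_graph n t (fun _ => 1)
    simpa using this.symm
  refine gibbs_strict _ (fun g => ENNReal.toReal_nonneg) hsum ?_
  by_contra! hc
  let a : Fin n := ⟨0, by omega⟩
  let b : Fin n := ⟨1, by omega⟩
  let c : Fin n := ⟨2, by omega⟩
  have hab : a < b := by simp [a, b]
  have hac : a < c := by simp [a, c]
  have hbc : b < c := by simp [b, c]
  let q : Pairs n := ⟨(a, b), hab⟩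
  let r : Pairs n := ⟨(a, c), hac⟩
  have hqr : q ≠ r := by
    intro h
    exact hbc.ne (congrArg (fun s : Pairs n => s.1.2) h)
  have h1 := integral_graph n t (fun g => es g a b * es g a c)
  simp only [hc] at h1
  rw [← Finset.mul_sum, flip_sum n a b c hab.ne hac.ne hbc.ne, mul_zero] at h1
  apply corr_ne_zero t
  have hmeas := measurable_sg t
  rw [← joint_law n a b c q r hab.ne hac.ne hbc.ne hqr, integral_map
    (Measurable.aemeasurable (by fun_prop)) (Measurable.aestronglyMeasurable (by fun_prop)), ← h1]
  refine integral_congr_ae (Filter.Eventually.of_forall fun ω => ?_)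
  have key : ∀ s : Pairs n, es ((graphEquiv n).symm (fun q => Zvar n ω q ≤ t)) s.1.1 s.1.2
      = sg t (Zvar n ω s) := by
    intro s
    have : ((graphEquiv n).symm (fun q => Zvar n ω q ≤ t)).Adj s.1.1 s.1.2 ↔ Zvar n ω s ≤ t := by
      have := congrFun ((graphEquiv n).apply_symm_apply (fun q => Zvar n ω q ≤ t)) s
      exact Iff.of_eq this
    unfold es sg
    simp only [this]
  have k1 : es ((graphEquiv n).symm (fun q => Zvar n ω q ≤ t)) a b
      = sg t (ω.1 a + ω.1 b + ω.2 q) := key q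
  have k2 : es ((graphEquiv n).symm (fun q => Zvar n ω q ≤ t)) a c
      = sg t (ω.1 a + ω.1 c + ω.2 r) := key r
  simp only [k1, k2, add_assoc]
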